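/- Let 𝒜 be a unital C*-algebra, 𝒮 ⊆ 𝒜 an operator system, and n a positive integer. Every positive linear map φ: 𝒮 → M_n(ℂ) is completely positive if and only if the cone 𝒮⁺ ⊗ M_n(ℂ)⁺ is dense in the set of positive elements of M_n(𝒮) (positivity taken in the C*-algebra M_n(𝒜)). -/

import Mathlib

/-!
Linear maps `φ : S → Mₙ(ℂ)` correspond to functionals on `Mₙ(S)` through the dual functional
`s_φ(x) = ∑ φ(x_{ij})_{ij}`; positivity of `φ` means that `s_φ ≥ 0` on `S⁺ ⊗ Mₙ(ℂ)⁺`, and complete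
positivity means that `s_φ ≥ 0` on `Mₙ(S)⁺`. The theorem is the resulting duality of cones.

If the cone is dense and `φ` is positive, then `s_φ` is nonnegative on the cone, and continuous
because positive maps on an operator system are bounded (`continuous_of_pos_functional`), so it is
nonnegative on `Mₙ(S)⁺` (`dualFunc_nonneg_of_mem_closure`). Each value of the quadratic form of
`φₘ(s)` equals `s_φ` at a scalar compression of `s`, a positive element of `Mₙ(S)`
(`isPosElem_compress`); hence `φ` is completely positive (`isCPMap_of_dense`).

Conversely, if some positive `s ∈ Mₙ(S)` is not in the closure of the cone, Hahn–Banach gives a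
linear functional `F` with real part nonnegative on the cone and negative at `s`
(`exists_separating`). The map `φ` with `s_φ` the Hermitian part of `F` (`hermMap`) is positive, but
`s_φ(s) < 0`, so that `φ` is not completely positive (`dualFunc_nonneg_of_isCPMap`).
-/

open scoped ComplexOrder
open Matrix

/-- An element of a star ring is *positive* if it equals `star b * b` for some `b`;
in a (matrix algebra over a) C*-algebra this is the usual notion of positivity. -/
def IsPosElem {R : Type*} [Ring R] [StarRing R] (x : R) : Prop :=
  ∃ b : R, x = star b * b

variable {A : Type*} [NormedRing A] [StarRing A] [CStarRing A]
  [CompleteSpace A] [NormedAlgebra ℂ A] [StarModule ℂ A]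

/-- The canonical image in `Mₘ(𝒜)` of a matrix with entries in the operator system `S`. -/
def matCoe {S : Submodule ℂ A} {m : ℕ} (s : Matrix (Fin m) (Fin m) S) :
    Matrix (Fin m) (Fin m) A :=
  Matrix.of fun j k => (s j k : A)

/-- `J_m(S)`: matrices over `S` which are positive in `Mₘ(𝒜)` together with their
partial transpose. -/
def memJ {S : Submodule ℂ A} {m : ℕ} (s : Matrix (Fin m) (Fin m) S) : Prop :=
  IsPosElem (matCoe s) ∧ IsPosElem (matCoe s)ᵀ

/-- A map `φ : S → Mₙ(ℂ)` is positive if it sends positive elements of `𝒜` lying in `S`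
to positive semidefinite matrices. -/
def IsPosMap {S : Submodule ℂ A} {n : ℕ}
    (φ : S →ₗ[ℂ] Matrix (Fin n) (Fin n) ℂ) : Prop :=
  ∀ s : S, IsPosElem (s : A) → IsPosElem (φ s)

/-- Complete positivity of `φ : S → Mₙ(ℂ)`: every positive matrix over `S` is sent,
entrywise, to a positive element of `Mₘ(Mₙ(ℂ))`. -/
def IsCPMap {S : Submodule ℂ A} {n : ℕ}
    (φ : S →ₗ[ℂ] Matrix (Fin n) (Fin n) ℂ) : Prop :=
  ∀ (m : ℕ) (s : Matrix (Fin m) (Fin m) S),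
    IsPosElem (matCoe s) → IsPosElem (s.map ⇑φ)

/-- `φ` is co-completely positive if `transpose ∘ φ` is completely positive. -/
def IsCoCPMap {S : Submodule ℂ A} {n : ℕ}
    (φ : S →ₗ[ℂ] Matrix (Fin n) (Fin n) ℂ) : Prop :=
  ∀ (m : ℕ) (s : Matrix (Fin m) (Fin m) S),
    IsPosElem (matCoe s) → IsPosElem (s.map fun a => (φ a)ᵀ)

/-- `φ` is decomposable if it is the sum of a completely positive and a
co-completely positive map. -/
noncomputable def IsDecomposable {S : Submodule ℂ A} {n : ℕ}
    (φ : S →ₗ[ℂ] Matrix (Fin n) (Fin n) ℂ) : Prop :=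
  ∃ ψ η : S →ₗ[ℂ] Matrix (Fin n) (Fin n) ℂ,
    IsCPMap ψ ∧ IsCoCPMap η ∧ φ = ψ + η

/-- The dual functional `s_φ` on `Mₙ(S)`, `s_φ([x_{ij}]) = ∑_{i,j} (φ(x_{ij}))_{ij}`. -/
noncomputable def dualFunc {S : Submodule ℂ A} {n : ℕ}
    (φ : S →ₗ[ℂ] Matrix (Fin n) (Fin n) ℂ)
    (x : Matrix (Fin n) (Fin n) S) : ℂ :=
  ∑ i, ∑ j, φ (x i j) i j

/-- The cone `S⁺ ⊗ Mₙ(ℂ)⁺` inside `Mₙ(𝒜)`: finite sums `∑ sₗ ⊗ xₗ` with `sₗ ∈ S`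
positive in `𝒜` and `xₗ` positive semidefinite. -/
def posCone (S : Submodule ℂ A) (n : ℕ) : Set (Matrix (Fin n) (Fin n) A) :=
  { T | ∃ (k : ℕ) (s : Fin k → A) (x : Fin k → Matrix (Fin n) (Fin n) ℂ),
      (∀ l, s l ∈ S ∧ IsPosElem (s l)) ∧ (∀ l, IsPosElem (x l)) ∧
      T = ∑ l, Matrix.of fun p q => x l p q • s l }

set_option linter.unusedSectionVars false

/-! ### Positive elements -/

/-- In a C*-algebra sums of elements `b* b` are again of this form: they are exactly the
nonnegative elements for the spectral order. -/
theorem isPosElem_add_of_cstar {B : Type*} [CStarAlgebra B] {x y : B}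
    (hx : IsPosElem x) (hy : IsPosElem y) : IsPosElem (x + y) := by
  let := CStarAlgebra.spectralOrder B
  have := CStarAlgebra.spectralOrderedRing B
  exact CStarAlgebra.nonneg_iff_eq_star_mul_self.1
    (add_nonneg (CStarAlgebra.nonneg_iff_eq_star_mul_self.2 hx)
      (CStarAlgebra.nonneg_iff_eq_star_mul_self.2 hy))

/-- The algebra of matrices over a C*-algebra is itself a C*-algebra (`CStarMatrix`), so sums of
positive matrices are positive. -/
theorem isPosElem_matrix_add_of_cstar {B : Type*} [CStarAlgebra B] {n : ℕ}
    {x y : Matrix (Fin n) (Fin n) B}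
    (hx : IsPosElem x) (hy : IsPosElem y) : IsPosElem (x + y) := by
  let := CStarAlgebra.spectralOrder B
  have := CStarAlgebra.spectralOrderedRing B
  exact isPosElem_add_of_cstar (B := CStarMatrix (Fin n) (Fin n) B) hx hy

theorem isPosElem_matrix_add {n : ℕ} {x y : Matrix (Fin n) (Fin n) A}
    (hx : IsPosElem x) (hy : IsPosElem y) : IsPosElem (x + y) := by
  let : CStarAlgebra A := {}
  exact isPosElem_matrix_add_of_cstar hx hy

theorem isPosElem_matrix_sum {n : ℕ} {ι : Type*} (I : Finset ι)
    (x : ι → Matrix (Fin n) (Fin n) A) (hx : ∀ i, IsPosElem (x i)) :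
    IsPosElem (∑ i ∈ I, x i) := by
  classical
  induction I using Finset.induction_on with
  | empty => exact ⟨0, by simp⟩
  | insert i I hi ih => rw [Finset.sum_insert hi]; exact isPosElem_matrix_add (hx i) ih

theorem isPosElem_norm_smul_one_sub {a : A} (ha : IsSelfAdjoint a) :
    IsPosElem ((‖a‖ : ℂ) • (1 : A) - a) := by
  let : CStarAlgebra A := {}
  let := CStarAlgebra.spectralOrder A
  have := CStarAlgebra.spectralOrderedRing A
  refine CStarAlgebra.nonneg_iff_eq_star_mul_self.1 (sub_nonneg.2 ?_)
  have h := ha.le_algebraMap_norm_self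
  rwa [Algebra.algebraMap_eq_smul_one, ← Complex.coe_smul] at h

/-- A complex matrix is of the form `b* b` iff its quadratic form is nonnegative. No symmetry of
`P` is assumed: over `ℂ` a real quadratic form forces `P` to be Hermitian. -/
theorem isPosElem_iff_quadForm {ι : Type*} [Fintype ι] [DecidableEq ι] (P : Matrix ι ι ℂ) :
    IsPosElem P ↔ ∀ v : ι → ℂ, 0 ≤ ∑ i, ∑ j, star (v i) * P i j * v j := by
  have key : ∀ v : ι → ℂ,
      ∑ i, ∑ j, star (v i) * P i j * v j = star v ⬝ᵥ (P *ᵥ v) := by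
    intro v
    simp [dotProduct, mulVec, Finset.mul_sum, mul_assoc]
  simp_rw [key]
  constructor
  · rintro ⟨b, rfl⟩ v
    exact (posSemidef_conjTranspose_mul_self b).dotProduct_mulVec_nonneg v
  · intro h
    have hP : P.PosSemidef := by
      rw [← Matrix.isPositive_toEuclideanLin_iff, LinearMap.isPositive_iff_complex]
      intro x
      have hx := h x.ofLp
      have e : inner ℂ (P.toEuclideanLin x) x = star (star x.ofLp ⬝ᵥ (P *ᵥ x.ofLp)) := by
        rw [← inner_conj_symm, EuclideanSpace.inner_eq_star_dotProduct]
        simp [dotProduct_comm]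
      rw [e]
      rw [Complex.le_def] at hx
      refine ⟨?_, by simpa using hx.1⟩
      apply Complex.ext
      · simp
      · simpa using hx.2.symm
    open scoped MatrixOrder Matrix.Norms.L2Operator in
    exact CStarAlgebra.nonneg_iff_eq_star_mul_self.1 hP.nonneg

/-- The version of `isPosElem_iff_quadForm` for block matrices, obtained by flattening
`Mₘ(Mₙ(ℂ))` to matrices indexed by `Fin m × Fin n`. -/
theorem isPosElem_block_iff_quadForm {m n : ℕ}
    (P : Matrix (Fin m) (Fin m) (Matrix (Fin n) (Fin n) ℂ)) :
    IsPosElem P ↔ ∀ v : Fin m × Fin n → ℂ,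
      0 ≤ ∑ a, ∑ b, star (v a) * P a.1 b.1 a.2 b.2 * v b := by
  refine Iff.trans ?_ (isPosElem_iff_quadForm (Matrix.comp _ _ _ _ ℂ P))
  have hstar : ∀ b : Matrix (Fin m) (Fin m) (Matrix (Fin n) (Fin n) ℂ),
      compRingEquiv (Fin m) (Fin n) ℂ (star b) = star (compRingEquiv (Fin m) (Fin n) ℂ b) :=
    fun b => rfl
  constructor
  · rintro ⟨b, rfl⟩
    exact ⟨compRingEquiv _ _ _ b, by rw [← hstar, ← map_mul]; rfl⟩
  · rintro ⟨c, hc⟩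
    refine ⟨(compRingEquiv _ _ _).symm c, (compRingEquiv (Fin m) (Fin n) ℂ).injective ?_⟩
    rw [map_mul, hstar, RingEquiv.apply_symm_apply]
    exact hc

/-- The matrix `[x_p* x_q]` is `b* b`, where `b` has first row `x` and zeros elsewhere; this is
where `0 < n` is needed. -/
theorem isPosElem_row {n : ℕ} (hn : 0 < n) (x : Fin n → A) :
    IsPosElem (Matrix.of fun p q => star (x p) * x q) := by
  refine ⟨Matrix.of fun i q => if i = ⟨0, hn⟩ then x q else 0, ?_⟩
  ext p q
  simp [Matrix.mul_apply, Matrix.star_apply, apply_ite star]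

/-- The compression `W* (b* b) W ∈ Mₙ(𝒜)` of a positive matrix in `Mₘ(𝒜)` by a scalar
`m × n` matrix `W` is positive. It is the sum over the rows `i` of `b W` of the matrices
`[y_{ip}* y_{iq}]`. -/
theorem isPosElem_compress {m n : ℕ} (hn : 0 < n) (b : Matrix (Fin m) (Fin m) A)
    (w : Fin m → Fin n → ℂ) :
    IsPosElem (Matrix.of fun p q =>
      ∑ j, ∑ k, (star (w j p) * w k q) • (star b * b) j k) := by
  have : (Matrix.of fun p q => ∑ j, ∑ k, (star (w j p) * w k q) • (star b * b) j k) =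
      ∑ i, Matrix.of fun p q => star (∑ j, w j p • b i j) * (∑ k, w k q • b i k) := by
    ext p q
    simp only [Matrix.of_apply, Matrix.sum_apply, Matrix.mul_apply, Matrix.star_apply, star_sum,
      star_smul, Finset.sum_mul_sum, smul_mul_smul_comm, Finset.smul_sum]
    rw [Finset.sum_comm_cycle]
  rw [this]
  exact isPosElem_matrix_sum _ _ fun i => isPosElem_row hn _

/-! ### Continuity of positive maps -/

/-- A positive functional on an operator system is bounded: a self-adjoint `a` satisfies
`±a ≤ ‖a‖ • 1`, and a general element is handled through its real and imaginary parts. -/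
theorem continuous_of_pos_functional {S : Submodule ℂ A} (h_one : (1 : A) ∈ S)
    (h_star : ∀ a ∈ S, star a ∈ S) (ψ : S →ₗ[ℂ] ℂ)
    (hψ : ∀ s : S, IsPosElem (s : A) → 0 ≤ ψ s) : Continuous ψ := by
  have h1 : 0 ≤ ψ ⟨1, h_one⟩ := hψ _ ⟨1, by simp⟩
  have hsa : ∀ s : S, IsSelfAdjoint (s : A) → ‖ψ s‖ ≤ ‖s‖ * (ψ ⟨1, h_one⟩).re := by
    have aux : ∀ s : S, IsSelfAdjoint (s : A) → 0 ≤ (‖s‖ : ℂ) * ψ ⟨1, h_one⟩ - ψ s := by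
      intro s hs
      have := hψ ((‖s‖ : ℂ) • (⟨1, h_one⟩ : S) - s) (isPosElem_norm_smul_one_sub hs)
      rwa [map_sub, map_smul, smul_eq_mul] at this
    intro s hs
    have a1 := aux s hs
    have a2 := aux (-s) (by simpa using hs.neg)
    rw [Complex.le_def] at a1 a2 h1
    simp only [Complex.zero_re, Complex.zero_im, Complex.sub_re, Complex.sub_im,
      Complex.re_ofReal_mul, Complex.im_ofReal_mul, map_neg, Complex.neg_re, Complex.neg_im,
      norm_neg] at a1 a2 h1
    have him : (ψ s).im = 0 := by linarith [a1.2, a2.2]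
    have : ψ s = ((ψ s).re : ℂ) := Complex.ext (by simp) (by simpa using him)
    rw [this, Complex.norm_real, Real.norm_eq_abs, abs_le]
    constructor <;> linarith [a1.1, a2.1]
  refine AddMonoidHomClass.continuous_of_bound ψ (2 * (ψ ⟨1, h_one⟩).re) fun s => ?_
  -- `2 s = h - i k` with `h = s + s*` and `k = i (s - s*)` self-adjoint elements of `S`.
  let t : S := ⟨star s, h_star _ s.2⟩
  have ht : ‖t‖ = ‖s‖ := norm_star (s : A)
  have hh := hsa (s + t) (by simp [t, IsSelfAdjoint, add_comm])
  have hk := hsa (Complex.I • (s - t)) (by simp [t, IsSelfAdjoint, ← smul_neg])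
  have e : ψ s = (1 / 2 : ℂ) * (ψ (s + t) - Complex.I * ψ (Complex.I • (s - t))) := by
    simp only [map_add, map_sub, map_smul, smul_eq_mul]
    linear_combination ((1 / 2 : ℂ) * (ψ s - ψ t)) * Complex.I_mul_I
  have n1 : ‖s + t‖ ≤ 2 * ‖s‖ := (norm_add_le _ _).trans (by linarith)
  have n2 : ‖Complex.I • (s - t)‖ ≤ 2 * ‖s‖ := by
    rw [norm_smul, Complex.norm_I, one_mul]
    exact (norm_sub_le _ _).trans (by linarith)
  have h1' : 0 ≤ (ψ ⟨1, h_one⟩).re := (Complex.le_def.1 h1).1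
  calc ‖ψ s‖ ≤ 1 / 2 * (‖ψ (s + t)‖ + ‖ψ (Complex.I • (s - t))‖) := by
        conv_lhs => rw [e]
        rw [norm_mul]
        refine mul_le_mul (by simp) ((norm_sub_le _ _).trans (by simp)) (norm_nonneg _) (by simp)
    _ ≤ 2 * (ψ ⟨1, h_one⟩).re * ‖s‖ := by
        nlinarith [mul_le_mul_of_nonneg_right n1 h1', mul_le_mul_of_nonneg_right n2 h1']

/-- The quadratic forms `s ↦ ⟨v, φ(s) v⟩` are positive functionals, hence continuous, and by
polarization so are the matrix entries of `φ`. -/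
theorem continuous_entry_of_isPosMap {S : Submodule ℂ A} (h_one : (1 : A) ∈ S)
    (h_star : ∀ a ∈ S, star a ∈ S) {n : ℕ} (φ : S →ₗ[ℂ] Matrix (Fin n) (Fin n) ℂ)
    (hφ : IsPosMap φ) (p q : Fin n) : Continuous fun s => φ s p q := by
  have hv : ∀ v : EuclideanSpace ℂ (Fin n),
      Continuous fun s => inner ℂ v ((φ s).toEuclideanLin v) := by
    intro v
    let ψ : S →ₗ[ℂ] ℂ :=
      { toFun := fun s => inner ℂ v ((φ s).toEuclideanLin v)
        map_add' := fun s t => by simp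
        map_smul' := fun c s => by simp }
    refine continuous_of_pos_functional h_one h_star ψ fun s hs => ?_
    have h := (isPosElem_iff_quadForm _).1 (hφ s hs) v.ofLp
    have e : ψ s = ∑ i, ∑ j, star (v.ofLp i) * φ s i j * v.ofLp j := by
      simp [ψ, EuclideanSpace.inner_eq_star_dotProduct, dotProduct, mulVec, Finset.mul_sum,
        mul_comm, mul_left_comm]
    rwa [e]
  have e : (fun s => φ s p q) = fun s => inner ℂ (EuclideanSpace.single p (1 : ℂ))
      ((φ s).toEuclideanLin (EuclideanSpace.single q (1 : ℂ))) := by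
    funext s
    simp [EuclideanSpace.inner_single_left]
  have hv' : ∀ v : EuclideanSpace ℂ (Fin n),
      Continuous fun s => inner ℂ ((φ s).toEuclideanLin v) v := fun v =>
    (Complex.continuous_conj.comp (hv v)).congr fun s => inner_conj_symm _ _
  have hpol : Continuous fun s => inner ℂ
      ((φ s).toEuclideanLin (EuclideanSpace.single q (1 : ℂ))) (EuclideanSpace.single p (1 : ℂ)) := by
    refine Continuous.congr ?_ (fun s => (inner_map_polarization _ _ _).symm)
    exact ((((hv' _).sub (hv' _)).add (continuous_const.mul (hv' _))).sub
      (continuous_const.mul (hv' _))).div_const _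
  rw [e]
  exact (Complex.continuous_conj.comp hpol).congr fun s => inner_conj_symm _ _

/-! ### Density implies complete positivity -/

/-- Writing `x = b* b`, the value of `s_φ` at `s ⊗ x` is the sum over the rows of `b` of the
quadratic form of `φ s`. -/
theorem dualFunc_nonneg_tensor {S : Submodule ℂ A} {n : ℕ}
    (φ : S →ₗ[ℂ] Matrix (Fin n) (Fin n) ℂ) (hφ : IsPosMap φ) (s : S) (hs : IsPosElem (s : A))
    (x : Matrix (Fin n) (Fin n) ℂ) (hx : IsPosElem x) :
    0 ≤ dualFunc φ (Matrix.of fun p q => x p q • s) := by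
  obtain ⟨b, rfl⟩ := hx
  have h := (isPosElem_iff_quadForm _).1 (hφ s hs)
  have : dualFunc φ (Matrix.of fun p q => (star b * b) p q • s) =
      ∑ r, ∑ p, ∑ q, star (b r p) * φ s p q * b r q := by
    simp only [dualFunc, Matrix.of_apply, map_smul, Matrix.smul_apply, Matrix.mul_apply,
      Matrix.star_apply, smul_eq_mul, Finset.sum_mul]
    rw [Finset.sum_comm_cycle]
    refine Finset.sum_congr rfl fun r _ => ?_
    refine Finset.sum_congr rfl fun p _ => Finset.sum_congr rfl fun q _ => ?_
    ring
  rw [this]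
  exact Finset.sum_nonneg fun r _ => h (b r)

theorem dualFunc_sum {S : Submodule ℂ A} {n : ℕ} (φ : S →ₗ[ℂ] Matrix (Fin n) (Fin n) ℂ)
    {k : ℕ} (x : Fin k → Matrix (Fin n) (Fin n) S) :
    dualFunc φ (∑ l, x l) = ∑ l, dualFunc φ (x l) := by
  simp only [dualFunc, Matrix.sum_apply, map_sum]
  rw [Finset.sum_comm_cycle]

theorem isInducing_matCoe {S : Submodule ℂ A} {n : ℕ} :
    Topology.IsInducing (matCoe : Matrix (Fin n) (Fin n) S → Matrix (Fin n) (Fin n) A) :=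
  Topology.IsInducing.piMap fun _ => Topology.IsInducing.piMap fun _ =>
    Topology.IsInducing.subtypeVal

/-- If `φ` is positive, then `s_φ` is nonnegative on the closure of the cone `S⁺ ⊗ Mₙ(ℂ)⁺`. -/
theorem dualFunc_nonneg_of_mem_closure {S : Submodule ℂ A} (h_one : (1 : A) ∈ S)
    (h_star : ∀ a ∈ S, star a ∈ S) {n : ℕ} (φ : S →ₗ[ℂ] Matrix (Fin n) (Fin n) ℂ)
    (hφ : IsPosMap φ) (t : Matrix (Fin n) (Fin n) S) (ht : matCoe t ∈ closure (posCone S n)) :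
    0 ≤ dualFunc φ t := by
  have hcont : Continuous (dualFunc φ) := by
    refine continuous_finsetSum _ fun i _ => continuous_finsetSum _ fun j _ => ?_
    exact (continuous_entry_of_isPosMap h_one h_star φ hφ i j).comp (continuous_id.matrix_elem i j)
  have hpos : ∀ t : Matrix (Fin n) (Fin n) S, matCoe t ∈ posCone S n → 0 ≤ dualFunc φ t := by
    rintro t ⟨k, s, x, hs, hx, he⟩
    have : t = ∑ l, Matrix.of fun p q => x l p q • (⟨s l, (hs l).1⟩ : S) := by
      ext p q
      have h := congrFun (congrFun he p) q
      simpa [matCoe, Matrix.sum_apply] using h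
    rw [this, dualFunc_sum]
    exact Finset.sum_nonneg fun l _ =>
      dualFunc_nonneg_tensor φ hφ ⟨s l, (hs l).1⟩ (hs l).2 (x l) (hx l)
  have hsub : posCone S n ⊆ Set.range (matCoe : Matrix (Fin n) (Fin n) S → _) := by
    rintro _ ⟨k, s, x, hs, hx, rfl⟩
    refine ⟨∑ l, Matrix.of fun p q => x l p q • (⟨s l, (hs l).1⟩ : S), ?_⟩
    ext p q
    simp [matCoe, Matrix.sum_apply]
  have hmem : t ∈ closure (matCoe ⁻¹' posCone S n) := by
    rw [isInducing_matCoe.closure_eq_preimage_closure_image, Set.mem_preimage,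
      Set.image_preimage_eq_of_subset hsub]
    exact ht
  exact closure_minimal (fun t ht => hpos t ht) (isClosed_Ici.preimage hcont) hmem

/-- The quadratic form of `φₘ(s)` at `v ∈ ℂᵐ ⊗ ℂⁿ` is `s_φ(t)`, where `t ∈ Mₙ(S)` is the
compression of `s` by the `m × n` matrix `v`. -/
theorem isCPMap_of_dense {S : Submodule ℂ A} (h_one : (1 : A) ∈ S)
    (h_star : ∀ a ∈ S, star a ∈ S) {n : ℕ} (hn : 0 < n)
    (hd : ∀ s : Matrix (Fin n) (Fin n) S, IsPosElem (matCoe s) →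
        matCoe s ∈ closure (posCone S n))
    (φ : S →ₗ[ℂ] Matrix (Fin n) (Fin n) ℂ) (hφ : IsPosMap φ) : IsCPMap φ := by
  rintro m s ⟨b, hb⟩
  rw [isPosElem_block_iff_quadForm]
  intro v
  let t : Matrix (Fin n) (Fin n) S :=
    Matrix.of fun p q => ∑ j, ∑ k, (star (v (j, p)) * v (k, q)) • s j k
  have ht : IsPosElem (matCoe t) := by
    have h := isPosElem_compress hn b fun j p => v (j, p)
    rw [← hb] at h
    convert h using 1
    ext p q
    simp [t, matCoe]
  have h := dualFunc_nonneg_of_mem_closure h_one h_star φ hφ t (hd t ht)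
  convert h using 1
  simp only [dualFunc, t, Matrix.of_apply, map_sum, map_smul, Matrix.sum_apply, Matrix.smul_apply,
    smul_eq_mul, Fintype.sum_prod_type, Matrix.map_apply]
  rw [Finset.sum_comm]
  refine Finset.sum_congr rfl fun p _ => ?_
  rw [Finset.sum_comm_cycle]
  refine Finset.sum_congr rfl fun q _ => ?_
  refine Finset.sum_congr rfl fun j _ => Finset.sum_congr rfl fun k _ => ?_
  ring


/-! ### Complete positivity implies density -/

theorem zero_mem_posCone (S : Submodule ℂ A) (n : ℕ) : 0 ∈ posCone S n :=
  ⟨0, Fin.elim0, Fin.elim0, fun l => l.elim0, fun l => l.elim0, by simp⟩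

theorem add_mem_posCone {S : Submodule ℂ A} {n : ℕ} {T U : Matrix (Fin n) (Fin n) A}
    (hT : T ∈ posCone S n) (hU : U ∈ posCone S n) : T + U ∈ posCone S n := by
  obtain ⟨k, s, x, hs, hx, rfl⟩ := hT
  obtain ⟨k', s', x', hs', hx', rfl⟩ := hU
  refine ⟨k + k', Fin.append s s', Fin.append x x', fun l => ?_, fun l => ?_, ?_⟩
  · refine Fin.addCases (fun i => ?_) (fun i => ?_) l
    · simpa using hs i
    · simpa using hs' i
  · refine Fin.addCases (fun i => ?_) (fun i => ?_) l
    · simpa using hx i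
    · simpa using hx' i
  · rw [Fin.sum_univ_add]
    simp

theorem smul_mem_posCone {S : Submodule ℂ A} {n : ℕ} {T : Matrix (Fin n) (Fin n) A}
    {r : ℝ} (hr : 0 ≤ r) (hT : T ∈ posCone S n) : (r : ℂ) • T ∈ posCone S n := by
  obtain ⟨k, s, x, hs, hx, rfl⟩ := hT
  refine ⟨k, s, fun l => (r : ℂ) • x l, hs, fun l => ?_, ?_⟩
  · obtain ⟨b, hb⟩ := hx l
    refine ⟨(Real.sqrt r : ℂ) • b, ?_⟩
    beta_reduce
    rw [hb, star_smul, smul_mul_smul_comm, Complex.star_def, Complex.conj_ofReal,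
      ← Complex.ofReal_mul, Real.mul_self_sqrt hr]
  · ext p q
    simp [Matrix.sum_apply, Finset.smul_sum, mul_smul]

/-- Hahn–Banach separation of a point from the closure of the cone `S⁺ ⊗ Mₙ(ℂ)⁺`. -/
theorem exists_separating {S : Submodule ℂ A} {n : ℕ} {T : Matrix (Fin n) (Fin n) A}
    (hT : T ∉ closure (posCone S n)) :
    ∃ F : Matrix (Fin n) (Fin n) A →ₗ[ℂ] ℂ,
      (∀ U ∈ posCone S n, 0 ≤ (F U).re) ∧ (F T).re < 0 := by
  have hconv : Convex ℝ (posCone S n) := by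
    intro a ha b hb r t hr ht _
    have := add_mem_posCone (smul_mem_posCone hr ha) (smul_mem_posCone ht hb)
    simpa only [Complex.coe_smul] using this
  have : LocallyConvexSpace ℝ (Matrix (Fin n) (Fin n) A) :=
    inferInstanceAs (LocallyConvexSpace ℝ (Fin n → Fin n → A))
  have : IsTopologicalAddGroup (Matrix (Fin n) (Fin n) A) :=
    inferInstanceAs (IsTopologicalAddGroup (Fin n → Fin n → A))
  have : ContinuousSMul ℂ (Matrix (Fin n) (Fin n) A) :=
    inferInstanceAs (ContinuousSMul ℂ (Fin n → Fin n → A))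
  obtain ⟨f, u, hf, hu⟩ := RCLike.geometric_hahn_banach_closed_point (𝕜 := ℂ)
    hconv.closure isClosed_closure hT
  have hu0 : 0 < u := by simpa using hf 0 (subset_closure (zero_mem_posCone S n))
  refine ⟨-f.toLinearMap, fun U hU => ?_, ?_⟩
  · by_contra! hneg
    have hpos : 0 < (f U).re := by simpa using hneg
    -- scaling `U` so that the real part of `f` on it is exactly `u` violates the separation
    have h := hf _ (subset_closure (smul_mem_posCone (div_nonneg hu0.le hpos.le) hU))
    rw [map_smul, smul_eq_mul] at h
    simp only [RCLike.re_eq_complex_re, Complex.re_ofReal_mul] at h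
    rw [div_mul_cancel₀ _ hpos.ne'] at h
    exact lt_irrefl _ h
  · have : u < (f T).re := hu
    simp only [LinearMap.neg_apply, Complex.neg_re]
    exact neg_neg_of_pos (hu0.trans this)

/-- The map `S → Mₙ(ℂ)` whose dual functional is the restriction to `Mₙ(S)` of the Hermitian part
`X ↦ (F X + conj (F X*)) / 2` of a linear functional `F` on `Mₙ(𝒜)`. -/
noncomputable def hermMap {S : Submodule ℂ A} {n : ℕ}
    (F : Matrix (Fin n) (Fin n) A →ₗ[ℂ] ℂ) : S →ₗ[ℂ] Matrix (Fin n) (Fin n) ℂ where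
  toFun s := Matrix.of fun p q =>
    (F (Matrix.single p q (s : A)) + star (F (Matrix.single q p (star (s : A))))) / 2
  map_add' s t := by
    ext p q
    simp only [Submodule.coe_add, star_add, Matrix.single_add, map_add, Matrix.of_apply,
      Matrix.add_apply]
    ring
  map_smul' c s := by
    ext p q
    simp only [Submodule.coe_smul, star_smul, ← Matrix.smul_single, map_smul, Matrix.of_apply,
      Matrix.smul_apply, smul_eq_mul, star_mul', star_star, RingHom.id_apply]
    ring

theorem dualFunc_hermMap {S : Submodule ℂ A} {n : ℕ}
    (F : Matrix (Fin n) (Fin n) A →ₗ[ℂ] ℂ) (x : Matrix (Fin n) (Fin n) S)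
    (hx : star (matCoe x) = matCoe x) :
    dualFunc (hermMap F) x = ((F (matCoe x)).re : ℂ) := by
  have h1 : F (matCoe x) = ∑ i, ∑ j, F (Matrix.single i j (x i j : A)) := by
    conv_lhs => rw [Matrix.matrix_eq_sum_single (matCoe x)]
    simp only [map_sum]
    rfl
  have h2 : F (matCoe x) = ∑ i, ∑ j, F (Matrix.single j i (star (x i j : A))) := by
    conv_lhs => rw [← hx, Matrix.matrix_eq_sum_single (star (matCoe x)), Finset.sum_comm]
    simp only [map_sum]
    rfl
  have h3 : dualFunc (hermMap F) x = (F (matCoe x) + star (F (matCoe x))) / 2 := by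
    conv_rhs => enter [1, 2]; rw [h2]
    rw [h1]
    simp only [dualFunc, hermMap, LinearMap.coe_mk, AddHom.coe_mk, Matrix.of_apply, star_sum,
      ← Finset.sum_div, Finset.sum_add_distrib]
  rw [h3, Complex.star_def, Complex.add_conj]
  push_cast
  ring

theorem star_eq_of_isPosElem {m : ℕ} {X : Matrix (Fin m) (Fin m) A} (h : IsPosElem X) :
    star X = X := by
  obtain ⟨b, rfl⟩ := h
  simp

/-- The quadratic form of `hermMap F s` at `v` is the real part of `F` at the elementary tensor
`s ⊗ [conj v_p * v_q]`, which lies in the cone when `s` is positive. -/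
theorem isPosMap_hermMap {S : Submodule ℂ A} {n : ℕ} (hn : 0 < n)
    (F : Matrix (Fin n) (Fin n) A →ₗ[ℂ] ℂ) (hF : ∀ U ∈ posCone S n, 0 ≤ (F U).re) :
    IsPosMap (hermMap F : S →ₗ[ℂ] _) := by
  intro s hs
  rw [isPosElem_iff_quadForm]
  intro v
  let x : Matrix (Fin n) (Fin n) ℂ := Matrix.of fun p q => star (v p) * v q
  have hx : IsPosElem x := isPosElem_row hn v
  let t : Matrix (Fin n) (Fin n) S := Matrix.of fun p q => x p q • s
  have ht : matCoe t ∈ posCone S n :=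
    ⟨1, fun _ => s, fun _ => x, fun _ => ⟨s.2, hs⟩, fun _ => hx, by
      ext p q
      simp [t, matCoe]⟩
  have hstar : star (matCoe t) = matCoe t := by
    obtain ⟨b, hb⟩ := hs
    ext p q
    simp [t, x, matCoe, Matrix.star_apply, hb, mul_comm]
  have e : ∑ p, ∑ q, star (v p) * hermMap F s p q * v q = dualFunc (hermMap F) t := by
    simp only [dualFunc, t, x, Matrix.of_apply, map_smul, Matrix.smul_apply, smul_eq_mul]
    refine Finset.sum_congr rfl fun p _ => Finset.sum_congr rfl fun q _ => ?_
    ring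
  rw [e, dualFunc_hermMap F t hstar]
  exact_mod_cast hF _ ht

/-- `s_φ(s)` is the quadratic form of `φₙ(s)` at the vector `∑ e_i ⊗ e_i`. -/
theorem dualFunc_nonneg_of_isCPMap {S : Submodule ℂ A} {n : ℕ}
    (φ : S →ₗ[ℂ] Matrix (Fin n) (Fin n) ℂ) (hφ : IsCPMap φ) (s : Matrix (Fin n) (Fin n) S)
    (hs : IsPosElem (matCoe s)) : 0 ≤ dualFunc φ s := by
  have h := (isPosElem_block_iff_quadForm _).1 (hφ n s hs) fun a => if a.1 = a.2 then 1 else 0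
  simpa [Fintype.sum_prod_type, dualFunc, apply_ite star] using h

/-- every positive map `φ : S → Mₙ(ℂ)` is completely positive iff the
cone `S⁺ ⊗ Mₙ(ℂ)⁺` is dense in the positive elements of `Mₙ(S)`. -/
theorem every_posMap_cp_iff
    (S : Submodule ℂ A) (h_one : (1 : A) ∈ S) (h_star : ∀ a ∈ S, star a ∈ S)
    (n : ℕ) (hn : 0 < n) :
    (∀ φ : S →ₗ[ℂ] Matrix (Fin n) (Fin n) ℂ, IsPosMap φ → IsCPMap φ) ↔
      (∀ s : Matrix (Fin n) (Fin n) S, IsPosElem (matCoe s) →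
        matCoe s ∈ closure (posCone S n)) := by
  refine ⟨fun h s hs => ?_, fun hd φ hφ => isCPMap_of_dense h_one h_star hn hd φ hφ⟩
  by_contra hT
  obtain ⟨F, hF, hlt⟩ := exists_separating hT
  have hcp := dualFunc_nonneg_of_isCPMap _ (h _ (isPosMap_hermMap hn F hF)) s hs
  rw [dualFunc_hermMap F s (star_eq_of_isPosElem hs), Complex.zero_le_real] at hcp
  exact hlt.not_ge hcp
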